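/- With the data of the stated setup, the matrix C = −D'(r)·D(r)⁻¹ (where D'(r) is the entrywise derivative of D at t = r) satisfies trace(C) = 0 and det(C) = −1/4; consequently the eigenvalues of C are 1/2 and −1/2. -/

import Mathlib

/-!
Write `l = l₃`, `c = cosh (r/2)`. The data satisfy the algebraic relations
`s² = 1 - 3l²`, `c² (1 - 4l²) = 1` (with `sinh (r/2) = 2lc`), and, since
`b₁² = (s - l)³ / (2s)` and `b₂² = (s + l)³ / (2s)`, the pair `b₁² + b₂² = 1`,
`s (b₂² - b₁²) = 3l - 8l³`. All quantities of interest are symmetric in the two indices, so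
these relations eliminate `s`, `b₁`, `b₂` and give `det D(r) = c (1 - 4l²)² = c⁻³ ≠ 0`,
`tr (D'(r) adj D(r)) = (det D)'(r) = 0` and `det D'(r) = -det D(r) / 4`. Dividing by `det D(r)`
gives the trace and determinant of `C`, hence its characteristic polynomial `X² - 1/4`.
-/

/-- The Jacobi coefficient function `f_λ(t) = cosh(t/2) − 2λ sinh(t/2)`. -/
noncomputable def jacobiF (lam t : ℝ) : ℝ :=
  Real.cosh (t / 2) - 2 * lam * Real.sinh (t / 2)

/-- The Jacobi coefficient function
`g_λ(t) = (cosh(t/2) − 1)(1 + 2cosh(t/2) − 2λ sinh(t/2))`. -/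
noncomputable def jacobiG (lam t : ℝ) : ℝ :=
  (Real.cosh (t / 2) - 1) * (1 + 2 * Real.cosh (t / 2) - 2 * lam * Real.sinh (t / 2))

/-- For a 2×2 matrix, `tr (A adj B) = 0` and `det A = -det B / 4 ≠ 0` determine the trace,
determinant and spectrum of `-(A B⁻¹)`. -/
lemma trace_det_spectrum_of_adjugate (A B : Matrix (Fin 2) (Fin 2) ℝ) (hB : B.det ≠ 0)
    (htr : (A * B.adjugate).trace = 0) (hdet : A.det = -(1 / 4) * B.det) :
    (-(A * B⁻¹)).trace = 0 ∧ (-(A * B⁻¹)).det = -(1 / 4) ∧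
      spectrum ℝ (-(A * B⁻¹)) = {1 / 2, -(1 / 2)} := by
  have t0 : (-(A * B⁻¹)).trace = 0 := by
    rw [Matrix.inv_def, Matrix.mul_smul, Matrix.trace_neg, Matrix.trace_smul, htr]
    simp
  have d0 : (-(A * B⁻¹)).det = -(1 / 4) := by
    rw [Matrix.det_neg, Matrix.det_mul, Matrix.det_nonsing_inv, hdet, Ring.inverse_eq_inv']
    simp only [Fintype.card_fin]
    field_simp
  refine ⟨t0, d0, ?_⟩
  ext x
  rw [Matrix.mem_spectrum_iff_isRoot_charpoly, Matrix.charpoly_fin_two, t0, d0]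
  simp only [Polynomial.IsRoot, Polynomial.eval_add, Polynomial.eval_sub, Polynomial.eval_mul,
    Polynomial.eval_pow, Polynomial.eval_X, Polynomial.eval_C, Set.mem_insert_iff,
    Set.mem_singleton_iff]
  constructor
  · intro hx
    have : (x - 1 / 2) * (x + 1 / 2) = 0 := by linear_combination hx
    rcases mul_eq_zero.mp this with h | h
    · left; linarith
    · right; linarith
  · rintro (rfl | rfl) <;> norm_num

lemma hasDerivAt_jacobiF (lam t : ℝ) :
    HasDerivAt (jacobiF lam) ((Real.sinh (t / 2) - 2 * lam * Real.cosh (t / 2)) / 2) t := by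
  have hh : HasDerivAt (fun t : ℝ => t / 2) (1 / 2) t := (hasDerivAt_id t).div_const 2
  exact (hh.cosh.sub (hh.sinh.const_mul (2 * lam))).congr_deriv (by ring)

lemma hasDerivAt_jacobiG (lam t : ℝ) :
    HasDerivAt (jacobiG lam)
      (Real.sinh (t / 2) / 2 * (1 + 2 * Real.cosh (t / 2) - 2 * lam * Real.sinh (t / 2))
        + (Real.cosh (t / 2) - 1) * (Real.sinh (t / 2) - lam * Real.cosh (t / 2))) t := by
  have hh : HasDerivAt (fun t : ℝ => t / 2) (1 / 2) t := (hasDerivAt_id t).div_const 2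
  exact ((hh.cosh.sub_const 1).mul
    (((hh.cosh.const_mul 2).const_add 1).sub
      (hh.sinh.const_mul (2 * lam)))).congr_deriv (by simp only [Pi.sub_apply]; ring)

/-- The radicands defining `b₁`, `b₂` are `(s - l)³ / (2s)` and `(s + l)³ / (2s)`, which are
positive because `|l| < s`; their sum and difference no longer involve the roots. -/
lemma sq_relations (l s l₁ l₂ b₁ b₂ : ℝ) (h : |l| < 1 / 2)
    (hs : s = Real.sqrt (1 - 3 * l ^ 2))
    (h1 : l₁ = (3 * l - s) / 2) (h2 : l₂ = (3 * l + s) / 2)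
    (hb1 : b₁ = Real.sqrt ((l - l₁) / (l₂ - l₁) * (1 + 4 * l * (l - l₂))))
    (hb2 : b₂ = Real.sqrt ((l - l₂) / (l₁ - l₂) * (1 + 4 * l * (l - l₁)))) :
    s ^ 2 = 1 - 3 * l ^ 2 ∧ b₁ ^ 2 + b₂ ^ 2 = 1 ∧ s * (b₂ ^ 2 - b₁ ^ 2) = 3 * l - 8 * l ^ 3 := by
  obtain ⟨hl1, hl2⟩ := abs_lt.mp h
  have hlt : l ^ 2 < 1 - 3 * l ^ 2 := by nlinarith
  have hs2 : s ^ 2 = 1 - 3 * l ^ 2 := by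
    rw [hs, Real.sq_sqrt]; nlinarith [sq_nonneg l]
  have habs : |l| < s := by rw [hs]; exact Real.lt_sqrt_of_sq_lt (by rwa [sq_abs])
  obtain ⟨ha, hb⟩ := abs_lt.mp habs
  have hs0 : 0 < s := (abs_nonneg l).trans_lt habs
  have e1 : (l - l₁) / (l₂ - l₁) * (1 + 4 * l * (l - l₂)) = (s - l) ^ 3 / (2 * s) := by
    have hd : l₂ - l₁ = s := by rw [h1, h2]; ring
    rw [hd, h1, h2]
    field_simp
    linear_combination (-2 * (s - l)) * hs2
  have e2 : (l - l₂) / (l₁ - l₂) * (1 + 4 * l * (l - l₁)) = (s + l) ^ 3 / (2 * s) := by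
    have hd : l₁ - l₂ = -s := by rw [h1, h2]; ring
    rw [hd, h1, h2]
    field_simp
    linear_combination (-2 * (s + l)) * hs2
  have hB1 : b₁ ^ 2 = (s - l) ^ 3 / (2 * s) := by
    rw [hb1, e1, Real.sq_sqrt]
    have : 0 < s - l := by linarith
    positivity
  have hB2 : b₂ ^ 2 = (s + l) ^ 3 / (2 * s) := by
    rw [hb2, e2, Real.sq_sqrt]
    have : 0 < s + l := by linarith
    positivity
  refine ⟨hs2, ?_, ?_⟩
  · rw [hB1, hB2]
    field_simp
    linear_combination 2 * s * hs2
  · rw [hB1, hB2]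
    field_simp
    linear_combination 6 * l * hs2

/-- With the setup of Case 2 (m₁ = 1) of Section 5, the matrix
`C = −D'(r)·D(r)⁻¹` satisfies `trace C = 0` and `det C = −1/4`; consequently its
eigenvalues (its spectrum) are `1/2` and `−1/2`. Here `r = 2 artanh(2λ₃)`, i.e.
`tanh(r/2) = 2λ₃` (and then `r ≠ 0` since `λ₃ ≠ 0`). -/
theorem stmt_16 (l₃ : ℝ) (h0 : l₃ ≠ 0) (h : |l₃| < 1 / 2)
    (s l₁ l₂ b₁ b₂ r : ℝ)
    (hs : s = Real.sqrt (1 - 3 * l₃ ^ 2))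
    (h1 : l₁ = (3 * l₃ - s) / 2) (h2 : l₂ = (3 * l₃ + s) / 2)
    (hb1 : b₁ = Real.sqrt ((l₃ - l₁) / (l₂ - l₁) * (1 + 4 * l₃ * (l₃ - l₂))))
    (hb2 : b₂ = Real.sqrt ((l₃ - l₂) / (l₁ - l₂) * (1 + 4 * l₃ * (l₃ - l₁))))
    (hr : Real.tanh (r / 2) = 2 * l₃)
    (D : ℝ → Matrix (Fin 2) (Fin 2) ℝ)
    (hD : ∀ t, D t = !![jacobiF l₁ t + b₁ ^ 2 * jacobiG l₁ t, b₁ * b₂ * jacobiG l₁ t;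
        b₁ * b₂ * jacobiG l₂ t, jacobiF l₂ t + b₂ ^ 2 * jacobiG l₂ t])
    (D' : Matrix (Fin 2) (Fin 2) ℝ)
    (hD' : ∀ i j, D' i j = deriv (fun t => D t i j) r)
    (C : Matrix (Fin 2) (Fin 2) ℝ) (hC : C = -(D' * (D r)⁻¹)) :
    C.trace = 0 ∧ C.det = -(1 / 4) ∧
      spectrum ℝ C = {1 / 2, -(1 / 2)} := by
  obtain ⟨hs2, hB, hsB⟩ := sq_relations l₃ s l₁ l₂ b₁ b₂ h hs h1 h2 hb1 hb2
  obtain ⟨c, hc⟩ : ∃ c, c = Real.cosh (r / 2) := ⟨_, rfl⟩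
  have hc0 : 0 < c := hc ▸ Real.cosh_pos _
  have hS : Real.sinh (r / 2) = 2 * l₃ * c := by
    rw [Real.tanh_eq_sinh_div_cosh, ← hc] at hr
    field_simp at hr
    linarith
  have hc2 : c ^ 2 * (1 - 4 * l₃ ^ 2) = 1 := by
    have := Real.cosh_sq (r / 2)
    rw [hS, ← hc] at this
    linear_combination this
  have hDF := fun L => hasDerivAt_jacobiF L r
  have hDG := fun L => hasDerivAt_jacobiG L r
  have eD' : D' = !![deriv (jacobiF l₁) r + b₁ ^ 2 * deriv (jacobiG l₁) r,
      b₁ * b₂ * deriv (jacobiG l₁) r; b₁ * b₂ * deriv (jacobiG l₂) r,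
      deriv (jacobiF l₂) r + b₂ ^ 2 * deriv (jacobiG l₂) r] := by
    ext i j
    rw [hD']
    simp only [hD]
    fin_cases i <;> fin_cases j
    · exact (((hDF l₁).differentiableAt.hasDerivAt).add
        ((hDG l₁).differentiableAt.hasDerivAt.const_mul _)).deriv
    · exact ((hDG l₁).differentiableAt.hasDerivAt.const_mul _).deriv
    · exact ((hDG l₂).differentiableAt.hasDerivAt.const_mul _).deriv
    · exact (((hDF l₂).differentiableAt.hasDerivAt).add
        ((hDG l₂).differentiableAt.hasDerivAt.const_mul _)).deriv
  -- `b₁² = 1/2 - d` and `b₂² = 1/2 + d` turn the symmetric expressions into polynomials in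
  -- `l₃`, `c`, `s²` and `s * d`.
  obtain ⟨d, hd⟩ : ∃ d, d = (b₂ ^ 2 - b₁ ^ 2) / 2 := ⟨_, rfl⟩
  have hb1' : b₁ ^ 2 = 1 / 2 - d := by linarith
  have hb2' : b₂ ^ 2 = 1 / 2 + d := by linarith
  have hsd : s * d = (3 * l₃ - 8 * l₃ ^ 3) / 2 := by rw [hd]; linarith
  have hdet : (D r).det = c * (1 - 4 * l₃ ^ 2) ^ 2 := by
    rw [hD, Matrix.det_fin_two_of]
    simp only [jacobiF, jacobiG, hS, ← hc, h1, h2]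
    clear * - hs2 hb1' hb2' hsd hc2
    grind
  have hne : (D r).det ≠ 0 := by
    rw [hdet]
    exact mul_ne_zero hc0.ne' (pow_ne_zero _ (right_ne_zero_of_mul (hc2 ▸ one_ne_zero)))
  rw [hC]
  refine trace_det_spectrum_of_adjugate D' (D r) hne ?_ ?_
  · rw [hD, eD', Matrix.adjugate_fin_two_of, Matrix.mul_fin_two, Matrix.trace_fin_two_of]
    simp only [(hDF _).deriv, (hDG _).deriv, jacobiF, jacobiG, hS, ← hc, h1, h2]
    clear * - hs2 hb1' hb2' hsd hc2
    grind
  · rw [hdet, eD', Matrix.det_fin_two_of]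
    simp only [(hDF _).deriv, (hDG _).deriv, hS, ← hc, h1, h2]
    clear * - hs2 hb1' hb2' hsd hc2
    grind
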